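/- (Cartan–Hadamard, metric version) Let (X,d) be a complete, path-connected length space whose metric is locally convex (every point has a geodesically convex neighborhood on which the induced metric is convex). Then the induced length metric d̃ on the universal cover X̃, for which the covering map is a local isometry, is globally convex and X̃ is uniquely geodesic. -/

import Mathlib

open Set

/-- The length metric associated with `d`: infimum of lengths of rectifiable curves. -/
noncomputable def lengthMetric {X : Type*} [MetricSpace X] (x y : X) : ENNReal :=
  ⨅ σ : {σ : ℝ → X // ContinuousOn σ (Set.Icc 0 1) ∧ σ 0 = x ∧ σ 1 = y ∧
      eVariationOn σ (Set.Icc 0 1) ≠ ⊤},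
    eVariationOn σ.1 (Set.Icc 0 1)

/-- `γ : [0,1] → X` is a geodesic segment from `x` to `y`, parametrized proportionally
to arc length (constant speed). -/
def IsGeodesicSeg {X : Type*} [MetricSpace X] (γ : ℝ → X) (x y : X) : Prop :=
  γ 0 = x ∧ γ 1 = y ∧
  ∀ s ∈ Set.Icc (0:ℝ) 1, ∀ t ∈ Set.Icc (0:ℝ) 1, dist (γ s) (γ t) = dist x y * |s - t|

/-- A constant-speed geodesic `γ : [0,1] → X` lying inside `U`. -/
def IsGeodesicIn {X : Type*} [MetricSpace X] (U : Set X) (γ : ℝ → X) : Prop :=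
  (∀ t ∈ Set.Icc (0:ℝ) 1, γ t ∈ U) ∧
  ∃ lam : ℝ, ∀ s ∈ Set.Icc (0:ℝ) 1, ∀ t ∈ Set.Icc (0:ℝ) 1,
    dist (γ s) (γ t) = lam * |s - t|

/-!
Let `Y` be a complete, simply connected length space with locally convex metric; completeness and
local convexity pass from `X` to its cover. Fix `a : Y` and let `G` be the space of local geodesics
`[0, 1] → Y` issuing from `a`, with the uniform metric. Local convexity makes `G` complete, and
along close local geodesics `c`, `c'` of `G` it gives `d (c t) (c' t) ≤ t * d (c 1) (c' 1)`, so the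
endpoint map `G → Y` preserves distances locally. It is also open: if `y` is close to `c 1`, a
local geodesic from `a` to `y` near `c` is built by extending a shorter one step by step, each step
being the fixed point of a contraction. Lifting short geodesics then shows that the endpoint map is
a covering. As `G` contracts to the constant curve and `Y` is simply connected, the endpoint map is
a bijection: two points are joined by exactly one local geodesic. In a length space the estimate
above globalizes. Comparing the rescalings of a single local geodesic shows that it is minimizing,
and splitting a quadrilateral of geodesics along a diagonal gives convexity.
-/

open Filter Metric Topology
open scoped NNReal

section Length

theorem edist_le_mul_eVariationOn_of_locally {Y Z : Type*} [PseudoEMetricSpace Y]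
    [PseudoEMetricSpace Z] {f : ℝ → Z} {g : ℝ → Y} {a b : ℝ} (hab : a ≤ b) (K : ℝ≥0)
    (h : ∀ x ∈ Icc a b, ∃ V ∈ 𝓝[Icc a b] x, ∀ s ∈ V, ∀ t ∈ V,
      edist (f s) (f t) ≤ K * edist (g s) (g t)) :
    edist (f a) (f b) ≤ K * eVariationOn g (Icc a b) := by
  choose! V hV hfg using h
  obtain ⟨t, ht0, ht, ⟨n, hn⟩, hcov⟩ := exists_monotone_Icc_subset_open_cover_Icc hab
    (c := fun x : Icc a b ↦ interior ((↑) ⁻¹' V x)) (fun _ ↦ isOpen_interior) fun x _ ↦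
      mem_iUnion.2 ⟨x, mem_interior_iff_mem_nhds.2 <|
        preimage_coe_mem_nhds_subtype.2 (hV x x.2)⟩
  have hstep (i : ℕ) : edist (f (t i)) (f (t (i + 1))) ≤ K * edist (g (t (i + 1))) (g (t i)) := by
    obtain ⟨x, hx⟩ := hcov i
    rw [edist_comm (g _)]
    have hxV : Icc (t i) (t (i + 1)) ⊆ (↑) ⁻¹' V x := hx.trans interior_subset
    exact hfg x x.2 _ (hxV (left_mem_Icc.2 (ht i.le_succ))) _ (hxV (right_mem_Icc.2 (ht i.le_succ)))
  calc edist (f a) (f b)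
      = edist (f (t 0)) (f (t n)) := by rw [ht0, hn n le_rfl]
    _ ≤ ∑ i ∈ Finset.range n, edist (f (t i)) (f (t (i + 1))) :=
        edist_le_range_sum_edist (fun i ↦ f (t i)) n
    _ ≤ ∑ i ∈ Finset.range n, K * edist (g (t (i + 1))) (g (t i)) :=
        Finset.sum_le_sum fun i _ ↦ hstep i
    _ ≤ K * eVariationOn g (Icc a b) := by
        rw [← Finset.mul_sum]
        gcongr
        exact eVariationOn.sum_le (u := fun i ↦ (t i : ℝ)) (fun i j hij ↦ ht hij) fun i ↦ (t i).2

theorem lipschitzOnWith_Icc_of_locally {Z : Type*} [PseudoEMetricSpace Z] {f : ℝ → Z} {a b : ℝ}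
    {K : ℝ≥0} (h : ∀ x ∈ Icc a b, ∃ V ∈ 𝓝[Icc a b] x, LipschitzOnWith K f V) :
    LipschitzOnWith K f (Icc a b) := by
  suffices key : ∀ s ∈ Icc a b, ∀ t ∈ Icc a b, s ≤ t → edist (f s) (f t) ≤ K * edist s t by
    intro s hs t ht
    rcases le_total s t with hst | hts
    · exact key s hs t ht hst
    · rw [edist_comm, edist_comm s]
      exact key t ht s hs hts
  intro s hs t ht hst
  have hsub : Icc s t ⊆ Icc a b := Icc_subset_Icc hs.1 ht.2
  refine (edist_le_mul_eVariationOn_of_locally (g := id) hst K fun x hx ↦ ?_).trans_eq ?_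
  · obtain ⟨V, hV, hf⟩ := h x (hsub hx)
    exact ⟨V, nhdsWithin_mono x hsub hV, hf⟩
  · rw [eVariationOn_id_Icc, edist_comm, edist_dist, Real.dist_eq, abs_of_nonneg (sub_nonneg.2 hst)]

/-- A metric space is a length space if its metric is its own length metric. -/
def IsLengthSpace (Y : Type*) [MetricSpace Y] : Prop :=
  ∀ a b : Y, lengthMetric a b = ENNReal.ofReal (dist a b)

variable {Y : Type*} [MetricSpace Y]

theorem IsLengthSpace.lipschitzWith_of_locally {Z : Type*} [PseudoEMetricSpace Z]
    (hY : IsLengthSpace Y) {f : Y → Z} {K : ℝ≥0}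
    (h : ∀ y, ∃ V ∈ 𝓝 y, LipschitzOnWith K f V) : LipschitzWith K f := by
  intro a b
  rw [edist_dist a, ← hY a b, lengthMetric, ENNReal.mul_iInf' (by simp) fun _ ↦ ?_]
  · refine le_iInf fun ⟨σ, hσ, hσ0, hσ1, _⟩ ↦ ?_
    have hlen := edist_le_mul_eVariationOn_of_locally (f := f ∘ σ) (g := σ) zero_le_one K
      fun x hx ↦ by
        obtain ⟨V, hV, hf⟩ := h (σ x)
        exact ⟨σ ⁻¹' V, hσ x hx hV, fun s hs t ht ↦ hf hs ht⟩
    rwa [Function.comp_apply, Function.comp_apply, hσ0, hσ1] at hlen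
  · by_contra hempty
    rw [not_nonempty_iff] at hempty
    exact ENNReal.ofReal_ne_top ((hY a b).symm.trans (iInf_of_empty _))

theorem IsLengthSpace.exists_curve_lt (hY : IsLengthSpace Y) {a b : Y} {r : ℝ}
    (h : dist a b < r) : ∃ σ : ℝ → Y, ContinuousOn σ (Icc 0 1) ∧ σ 0 = a ∧ σ 1 = b ∧
      eVariationOn σ (Icc 0 1) < ENNReal.ofReal r := by
  have hlt : lengthMetric a b < ENNReal.ofReal r := by
    rw [hY]
    exact (ENNReal.ofReal_lt_ofReal_iff_of_nonneg dist_nonneg).2 h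
  obtain ⟨⟨σ, hσ, hσ0, hσ1, _⟩, hlen⟩ := iInf_lt_iff.1 hlt
  exact ⟨σ, hσ, hσ0, hσ1, hlen⟩

theorem IsLengthSpace.isPreconnected_ball (hY : IsLengthSpace Y) (x : Y) (r : ℝ) :
    IsPreconnected (ball x r) := by
  refine isPreconnected_of_forall x fun y hy ↦ ?_
  obtain ⟨σ, hσ, hσ0, hσ1, hlen⟩ := hY.exists_curve_lt (mem_ball'.1 hy)
  refine ⟨σ '' Icc 0 1, ?_, ⟨0, by simp, hσ0⟩, ⟨1, by simp, hσ1⟩,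
    isPreconnected_Icc.image σ hσ⟩
  rintro _ ⟨t, ht, rfl⟩
  have : edist (σ t) (σ 0) < ENNReal.ofReal r :=
    (eVariationOn.edist_le σ ht (left_mem_Icc.2 zero_le_one)).trans_lt hlen
  rwa [hσ0, edist_lt_ofReal] at this

end Length

section MaximumPrinciple

variable {φ : ℝ → ℝ} {a b : ℝ}

theorem nonpos_of_locally_midpoint_le (hφ : ContinuousOn φ (Icc a b))
    (hmid : ∀ t ∈ Ioo a b, ∀ᶠ s in 𝓝[>] (0 : ℝ), 2 * φ t ≤ φ (t - s) + φ (t + s))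
    (ha : φ a ≤ 0) (hb : φ b ≤ 0) {t : ℝ} (ht : t ∈ Icc a b) : φ t ≤ 0 := by
  obtain ⟨m, hm, hmax⟩ := isCompact_Icc.exists_isMaxOn ⟨t, ht⟩ hφ
  by_contra! hpos
  have hm_pos : 0 < φ m := hpos.trans_le (hmax ht)
  -- At the leftmost maximum `l`, the values at `l - s` are strictly below the maximum.
  obtain ⟨l, ⟨hl, hlm⟩, hleast⟩ :=
    (isCompact_Icc.of_isClosed_subset (hφ.preimage_isClosed_of_isClosed isClosed_Icc
      isClosed_singleton) inter_subset_left).exists_isLeast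
      (s := Icc a b ∩ φ ⁻¹' {φ m}) ⟨m, hm, rfl⟩
  rw [mem_preimage, mem_singleton_iff] at hlm
  have hal : a < l := hl.1.lt_of_ne fun h ↦ by rw [← h] at hlm; linarith
  have hlb : l < b := hl.2.lt_of_ne fun h ↦ by rw [h] at hlm; linarith
  obtain ⟨s, hs_mid, hs_pos, hs_lt⟩ := ((hmid l ⟨hal, hlb⟩).and
    (Ioo_mem_nhdsGT (lt_min (sub_pos.2 hal) (sub_pos.2 hlb)))).exists
  obtain ⟨hsa, hsb⟩ := lt_min_iff.1 hs_lt
  have hleft : l - s ∈ Icc a b := ⟨by linarith, by linarith⟩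
  have hlt : φ (l - s) < φ m := (hmax hleft).lt_of_ne fun h ↦ by
    linarith [hleast ⟨hleft, h⟩]
  have hle : φ (l + s) ≤ φ m := hmax ⟨by linarith, by linarith⟩
  linarith

theorem convexOn_Icc_of_locally_midpoint_le (hφ : ContinuousOn φ (Icc a b))
    (hmid : ∀ t ∈ Ioo a b, ∀ᶠ s in 𝓝[>] (0 : ℝ), 2 * φ t ≤ φ (t - s) + φ (t + s)) :
    ConvexOn ℝ (Icc a b) φ := by
  refine LinearOrder.convexOn_of_lt (convex_Icc a b) fun x hx y hy hxy α β hα hβ hαβ ↦ ?_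
  have hsub : Icc x y ⊆ Icc a b := Icc_subset_Icc hx.1 hy.2
  have hne : y - x ≠ 0 := (sub_pos.2 hxy).ne'
  let chord : ℝ → ℝ := fun t ↦ φ x + (t - x) / (y - x) * (φ y - φ x)
  have key := nonpos_of_locally_midpoint_le (φ := fun t ↦ φ t - chord t) (a := x) (b := y)
    (t := α • x + β • y) ((hφ.mono hsub).sub (by fun_prop))
    (fun t ht ↦ (hmid t (Ioo_subset_Ioo hx.1 hy.2 ht)).mono fun s hs ↦ by
      have : chord (t - s) + chord (t + s) = 2 * chord t := by simp only [chord]; ring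
      linarith)
    (by simp [chord]) (by simp [chord, hne])
    (convex_Icc x y (left_mem_Icc.2 hxy.le) (right_mem_Icc.2 hxy.le) hα.le hβ.le hαβ)
  have hchord : chord (α • x + β • y) = α • φ x + β • φ y := by
    obtain rfl : α = 1 - β := by linarith
    simp only [chord, smul_eq_mul]
    field_simp
    ring
  linarith

end MaximumPrinciple

section Geodesics

variable {Y : Type*} [MetricSpace Y] {f g : ℝ → Y} {v w a b : ℝ} {s : Set ℝ}

/-- `f` is a geodesic of constant speed `v` on the parameter set `s`. -/
def IsGeodesicOn (f : ℝ → Y) (v : ℝ) (s : Set ℝ) : Prop :=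
  ∀ x ∈ s, ∀ y ∈ s, dist (f x) (f y) = v * |x - y|

/-- `f` is a local geodesic of constant speed `v` on the parameter set `s`. On the compact
intervals where this is used, a scale `δ` that works at all points costs no generality. -/
def IsLocalGeodesicOn (f : ℝ → Y) (v : ℝ) (s : Set ℝ) : Prop :=
  ∃ δ > 0, ∀ x ∈ s, ∀ y ∈ s, |x - y| ≤ δ → dist (f x) (f y) = v * |x - y|

theorem IsGeodesicOn.isLocalGeodesicOn (hf : IsGeodesicOn f v s) : IsLocalGeodesicOn f v s :=
  ⟨1, one_pos, fun x hx y hy _ ↦ hf x hx y hy⟩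

theorem IsGeodesicOn.comp_affine (hf : IsGeodesicOn f v s) {k m : ℝ} {s' : Set ℝ}
    (h : MapsTo (fun t ↦ k * t + m) s' s) : IsGeodesicOn (fun t ↦ f (k * t + m)) (v * |k|) s' :=
  fun x hx y hy ↦ by rw [hf _ (h hx) _ (h hy), mul_assoc, ← abs_mul]; ring_nf

namespace IsLocalGeodesicOn

theorem mono (hf : IsLocalGeodesicOn f v s) {s' : Set ℝ} (h : s' ⊆ s) :
    IsLocalGeodesicOn f v s' := by
  obtain ⟨δ, hδ, hf⟩ := hf
  exact ⟨δ, hδ, fun x hx y hy ↦ hf x (h hx) y (h hy)⟩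

theorem congr (hf : IsLocalGeodesicOn f v s) (h : EqOn f g s) : IsLocalGeodesicOn g v s := by
  obtain ⟨δ, hδ, hf⟩ := hf
  exact ⟨δ, hδ, fun x hx y hy ↦ by rw [← h hx, ← h hy]; exact hf x hx y hy⟩

theorem comp_affine (hf : IsLocalGeodesicOn f v s) {k m : ℝ} {s' : Set ℝ}
    (h : MapsTo (fun t ↦ k * t + m) s' s) :
    IsLocalGeodesicOn (fun t ↦ f (k * t + m)) (v * |k|) s' := by
  obtain ⟨δ, hδ, hf⟩ := hf
  refine ⟨δ / (|k| + 1), by positivity, fun x hx y hy hxy ↦ ?_⟩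
  have heq : |k * x + m - (k * y + m)| = |k| * |x - y| := by rw [← abs_mul]; ring_nf
  have hle : |k| * |x - y| ≤ δ :=
    calc |k| * |x - y| ≤ (|k| + 1) * (δ / (|k| + 1)) := by gcongr; linarith
      _ = δ := by field_simp
  rw [hf _ (h hx) _ (h hy) (heq ▸ hle), heq, mul_assoc]

theorem isGeodesicOn_Icc (hf : IsLocalGeodesicOn f v s) :
    ∃ δ > 0, ∀ x y, Icc x y ⊆ s → y - x ≤ δ → IsGeodesicOn f v (Icc x y) := by
  obtain ⟨δ, hδ, hf⟩ := hf
  exact ⟨δ, hδ, fun x y hsub hxy t ht u hu ↦ hf t (hsub ht) u (hsub hu)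
    ((abs_sub_le_of_le_of_le ht.1 ht.2 hu.1 hu.2).trans hxy)⟩

theorem speed_unique (hf : IsLocalGeodesicOn f v (Icc a b)) (hf' : IsLocalGeodesicOn f w (Icc a b))
    (hab : a < b) : v = w := by
  obtain ⟨δ, hδ, hf⟩ := hf
  obtain ⟨δ', hδ', hf'⟩ := hf'
  obtain ⟨h, hpos, hle⟩ : ∃ h > 0, h ≤ min (min δ δ') (b - a) :=
    ⟨_, lt_min (lt_min hδ hδ') (sub_pos.2 hab), le_rfl⟩
  simp only [le_min_iff] at hle
  have ha : a ∈ Icc a b := left_mem_Icc.2 hab.le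
  have hah : a + h ∈ Icc a b := ⟨by linarith, by linarith⟩
  have habs : |a + h - a| = h := by rw [add_sub_cancel_left, abs_of_pos hpos]
  exact mul_right_cancel₀ (abs_ne_zero.2 (by simpa using hpos.ne')) <|
    (hf _ hah a ha (habs.trans_le hle.1.1)).symm.trans (hf' _ hah a ha (habs.trans_le hle.1.2))

theorem speed_nonneg (hf : IsLocalGeodesicOn f v (Icc a b)) (hab : a < b) : 0 ≤ v := by
  obtain ⟨δ, hδ, hf⟩ := hf
  have hh : 0 < min δ (b - a) := lt_min hδ (sub_pos.2 hab)
  have habs : |a - (a + min δ (b - a))| = min δ (b - a) := by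
    rw [sub_add_cancel_left, abs_neg, abs_of_pos hh]
  refine nonneg_of_mul_nonneg_left (b := min δ (b - a)) ?_ hh
  rw [← habs, ← hf a (left_mem_Icc.2 hab.le) _
    ⟨by linarith, by linarith [min_le_right δ (b - a)]⟩ (habs.trans_le (min_le_left _ _))]
  exact dist_nonneg

theorem lipschitzOnWith (hf : IsLocalGeodesicOn f v (Icc a b)) :
    LipschitzOnWith v.toNNReal f (Icc a b) := by
  obtain ⟨δ, hδ, hf⟩ := hf
  refine lipschitzOnWith_Icc_of_locally fun x _ ↦ ⟨Icc a b ∩ ball x (δ / 2),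
    inter_mem_nhdsWithin _ (ball_mem_nhds x (half_pos hδ)), LipschitzOnWith.of_dist_le_mul
      fun y hy z hz ↦ ?_⟩
  have hyz : |y - z| ≤ δ := by
    rw [← Real.dist_eq]
    linarith [dist_triangle_right y z x, mem_ball.1 hy.2, mem_ball.1 hz.2]
  rw [hf y hy.1 z hz.1 hyz, Real.dist_eq]
  gcongr
  exact Real.le_coe_toNNReal v

theorem continuousOn (hf : IsLocalGeodesicOn f v (Icc a b)) : ContinuousOn f (Icc a b) :=
  hf.lipschitzOnWith.continuousOn

theorem union {c d : ℝ} (hf : IsLocalGeodesicOn f v (Icc a c))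
    (hg : IsLocalGeodesicOn f v (Icc b d)) (hbc : b < c) : IsLocalGeodesicOn f v (Icc a d) := by
  obtain ⟨δ, hδ, hf⟩ := hf
  obtain ⟨δ', hδ', hg⟩ := hg
  refine ⟨min (min δ δ') (c - b), lt_min (lt_min hδ hδ') (sub_pos.2 hbc), fun x hx y hy hxy ↦ ?_⟩
  obtain ⟨⟨hxδ, hxδ'⟩, hxc⟩ := by simpa only [le_min_iff] using hxy
  obtain ⟨hyx, hxy⟩ := abs_le.1 hxc
  by_cases! h : b ≤ x ∧ b ≤ y
  · exact hg x ⟨h.1, hx.2⟩ y ⟨h.2, hy.2⟩ hxδ'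
  · have hc : x ≤ c ∧ y ≤ c := by
      rcases le_or_gt b x with hbx | hxb
      · have := h hbx
        constructor <;> linarith
      · constructor <;> linarith
    exact hf x ⟨hx.1, hc.1⟩ y ⟨hy.1, hc.2⟩ hxδ

theorem exists_glue {c d : ℝ} (hf : IsLocalGeodesicOn f v (Icc a c))
    (hg : IsLocalGeodesicOn g w (Icc b d)) (hab : a ≤ b) (hbc : b < c) (hcd : c ≤ d)
    (hfg : EqOn f g (Icc b c)) :
    ∃ k, IsLocalGeodesicOn k v (Icc a d) ∧ EqOn k f (Icc a c) ∧ EqOn k g (Icc b d) := by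
  obtain rfl : v = w := ((hf.mono (Icc_subset_Icc_left hab)).congr hfg).speed_unique
    (hg.mono (Icc_subset_Icc_right hcd)) hbc
  let k : ℝ → Y := fun t ↦ if t ≤ c then f t else g t
  have hkf : EqOn k f (Icc a c) := fun t ht ↦ if_pos ht.2
  have hkg : EqOn k g (Icc b d) := fun t ht ↦ by
    by_cases htc : t ≤ c
    · exact (if_pos htc).trans (hfg ⟨ht.1, htc⟩)
    · exact if_neg htc
  exact ⟨k, (hf.congr hkf.symm).union (hg.congr hkg.symm) hbc, hkf, hkg⟩

end IsLocalGeodesicOn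

/-- A set in which any two points are joined by a geodesic of the set, and on which the metric is
convex along such geodesics. -/
def IsConvexRegion (U : Set Y) : Prop :=
  (∀ a ∈ U, ∀ b ∈ U, ∃ γ : ℝ → Y, γ 0 = a ∧ γ 1 = b ∧ IsGeodesicIn U γ) ∧
  (∀ γ₁ γ₂ : ℝ → Y, IsGeodesicIn U γ₁ → IsGeodesicIn U γ₂ → ∀ t ∈ Icc (0 : ℝ) 1,
    dist (γ₁ t) (γ₂ t) ≤ (1 - t) * dist (γ₁ 0) (γ₂ 0) + t * dist (γ₁ 1) (γ₂ 1))

namespace IsConvexRegion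

variable {U : Set Y}

theorem ball (hU : IsConvexRegion U) {z : Y} {r : ℝ} (hsub : ball z r ⊆ U) :
    IsConvexRegion (ball z r) := by
  have hmono {γ : ℝ → Y} (h : IsGeodesicIn (Metric.ball z r) γ) : IsGeodesicIn U γ :=
    ⟨fun t ht ↦ hsub (h.1 t ht), h.2⟩
  refine ⟨fun a ha b hb ↦ ?_, fun γ₁ γ₂ h₁ h₂ ↦ hU.2 γ₁ γ₂ (hmono h₁) (hmono h₂)⟩
  obtain ⟨γ, hγ0, hγ1, hγ⟩ := hU.1 a (hsub ha) b (hsub hb)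
  have hconst : IsGeodesicIn U fun _ ↦ z :=
    ⟨fun _ _ ↦ hsub (mem_ball_self (pos_of_mem_ball ha)), 0, by simp⟩
  refine ⟨γ, hγ0, hγ1, fun t ht ↦ ?_, hγ.2⟩
  calc dist (γ t) z ≤ (1 - t) * dist (γ 0) z + t * dist (γ 1) z := hU.2 γ _ hγ hconst t ht
    _ < r := by
      rw [hγ0, hγ1]
      exact (convex_Iio r) ha hb (sub_nonneg.2 ht.2) ht.1 (sub_add_cancel _ _)

theorem exists_isGeodesicOn (hU : IsConvexRegion U) {x y : Y} (hx : x ∈ U) (hy : y ∈ U)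
    (hab : a < b) : ∃ (f : ℝ → Y) (v : ℝ), IsGeodesicOn f v (Icc a b) ∧ MapsTo f (Icc a b) U ∧
      f a = x ∧ f b = y := by
  obtain ⟨γ, hγ0, hγ1, hγU, v, hγ⟩ := hU.1 x hx y hy
  have hne : b - a ≠ 0 := (sub_pos.2 hab).ne'
  have hmaps : MapsTo (fun t ↦ (b - a)⁻¹ * t + -(b - a)⁻¹ * a) (Icc a b) (Icc 0 1) := by
    intro t ht
    have : (b - a)⁻¹ * t + -(b - a)⁻¹ * a = (t - a) / (b - a) := by ring
    simp only [this]
    exact unitInterval.div_mem (sub_nonneg.2 ht.1) (sub_pos.2 hab).le (by linarith [ht.2])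
  refine ⟨_, _, IsGeodesicOn.comp_affine hγ hmaps, fun t ht ↦ hγU _ (hmaps ht), ?_, ?_⟩
  · rw [show (b - a)⁻¹ * a + -(b - a)⁻¹ * a = 0 by ring, hγ0]
  · rw [show (b - a)⁻¹ * b + -(b - a)⁻¹ * a = 1 by field_simp; ring, hγ1]

theorem isGeodesicIn_comp_affine (hf : IsGeodesicOn f v (Icc a b)) (hfU : MapsTo f (Icc a b) U)
    (hab : a ≤ b) : IsGeodesicIn U fun t ↦ f ((b - a) * t + a) := by
  have hmaps : MapsTo (fun t ↦ (b - a) * t + a) (Icc 0 1) (Icc a b) := fun t ht ↦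
    ⟨by nlinarith [ht.1], by nlinarith [ht.2]⟩
  exact ⟨fun t ht ↦ hfU (hmaps ht), _, hf.comp_affine hmaps⟩

theorem two_mul_dist_midpoint_le (hU : IsConvexRegion U) {t h : ℝ} (hh : 0 ≤ h)
    (hf : IsGeodesicOn f v (Icc (t - h) (t + h))) (hfU : MapsTo f (Icc (t - h) (t + h)) U)
    (hg : IsGeodesicOn g w (Icc (t - h) (t + h))) (hgU : MapsTo g (Icc (t - h) (t + h)) U) :
    2 * dist (f t) (g t) ≤ dist (f (t - h)) (g (t - h)) + dist (f (t + h)) (g (t + h)) := by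
  have hle : t - h ≤ t + h := by linarith
  have key := hU.2 _ _ (isGeodesicIn_comp_affine hf hfU hle) (isGeodesicIn_comp_affine hg hgU hle)
    (1 / 2) ⟨by norm_num, by norm_num⟩
  simp only [mul_zero, zero_add, mul_one, sub_add_cancel,
    show (t + h - (t - h)) * (1 / 2) + (t - h) = t by ring] at key
  linarith

end IsConvexRegion

namespace IsLocalGeodesicOn

theorem convexOn_dist (hf : IsLocalGeodesicOn f v (Icc a b))
    (hg : IsLocalGeodesicOn g w (Icc a b))
    (hU : ∀ t ∈ Ioo a b, ∃ U, IsConvexRegion U ∧ U ∈ 𝓝 (f t) ∧ U ∈ 𝓝 (g t)) :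
    ConvexOn ℝ (Icc a b) fun t ↦ dist (f t) (g t) := by
  refine convexOn_Icc_of_locally_midpoint_le
    (continuous_dist.comp_continuousOn (hf.continuousOn.prodMk hg.continuousOn)) fun t ht ↦ ?_
  obtain ⟨U, hU, hUf, hUg⟩ := hU t ht
  obtain ⟨δ, hδ, hfgeo⟩ := hf.isGeodesicOn_Icc
  obtain ⟨δ', hδ', hggeo⟩ := hg.isGeodesicOn_Icc
  have hnhds : Icc a b ∈ 𝓝 t := Icc_mem_nhds ht.1 ht.2
  have hV : Icc a b ∩ (f ⁻¹' U ∩ g ⁻¹' U) ∈ 𝓝 t := inter_mem hnhds <| inter_mem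
    ((hf.continuousOn.continuousAt hnhds).preimage_mem_nhds hUf)
    ((hg.continuousOn.continuousAt hnhds).preimage_mem_nhds hUg)
  obtain ⟨ρ, hρ, hsub⟩ := Metric.nhds_basis_closedBall.mem_iff.1 hV
  filter_upwards [Ioo_mem_nhdsGT (lt_min hρ (lt_min (half_pos hδ) (half_pos hδ')))] with h hh
  obtain ⟨hhρ, hhδ, hhδ'⟩ := by simpa only [lt_min_iff] using hh.2
  have hI : Icc (t - h) (t + h) ⊆ Icc a b ∩ (f ⁻¹' U ∩ g ⁻¹' U) := by
    rw [← Real.closedBall_eq_Icc]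
    exact (closedBall_subset_closedBall hhρ.le).trans hsub
  exact hU.two_mul_dist_midpoint_le hh.1.le
    (hfgeo _ _ (hI.trans inter_subset_left) (by linarith)) (fun x hx ↦ (hI hx).2.1)
    (hggeo _ _ (hI.trans inter_subset_left) (by linarith)) (fun x hx ↦ (hI hx).2.2)

theorem dist_le (hf : IsLocalGeodesicOn f v (Icc a b)) (hg : IsLocalGeodesicOn g w (Icc a b))
    (hU : ∀ t ∈ Ioo a b, ∃ U, IsConvexRegion U ∧ U ∈ 𝓝 (f t) ∧ U ∈ 𝓝 (g t)) {r : ℝ}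
    (ha : dist (f a) (g a) ≤ r) (hb : dist (f b) (g b) ≤ r) {t : ℝ} (ht : t ∈ Icc a b) :
    dist (f t) (g t) ≤ r := by
  have hab : a ≤ b := ht.1.trans ht.2
  exact ((hf.convexOn_dist hg hU).le_max_of_mem_Icc (left_mem_Icc.2 hab) (right_mem_Icc.2 hab)
    ht).trans (max_le ha hb)

theorem dist_le_mul (hf : IsLocalGeodesicOn f v (Icc 0 1))
    (hg : IsLocalGeodesicOn g w (Icc 0 1))
    (hU : ∀ t ∈ Ioo 0 1, ∃ U, IsConvexRegion U ∧ U ∈ 𝓝 (f t) ∧ U ∈ 𝓝 (g t)) (h0 : f 0 = g 0)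
    {t : ℝ} (ht : t ∈ Icc 0 1) : dist (f t) (g t) ≤ t * dist (f 1) (g 1) := by
  have := (hf.convexOn_dist hg hU).2 (left_mem_Icc.2 zero_le_one) (right_mem_Icc.2 zero_le_one)
    (sub_nonneg.2 ht.2) ht.1 (sub_add_cancel _ _)
  simpa [h0] using this

theorem eqOn (hf : IsLocalGeodesicOn f v (Icc a b)) (hg : IsLocalGeodesicOn g w (Icc a b))
    (hU : ∀ t ∈ Ioo a b, ∃ U, IsConvexRegion U ∧ U ∈ 𝓝 (f t) ∧ U ∈ 𝓝 (g t))
    (ha : f a = g a) (hb : f b = g b) : EqOn f g (Icc a b) := fun _ ht ↦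
  dist_le_zero.1 (hf.dist_le hg hU (dist_le_zero.2 ha) (dist_le_zero.2 hb) ht)

theorem isGeodesicOn (hf : IsLocalGeodesicOn f v (Icc a b)) {U : Set Y} (hU : IsConvexRegion U)
    (hUo : IsOpen U) (hfU : MapsTo f (Icc a b) U) : IsGeodesicOn f v (Icc a b) := by
  rcases le_or_gt b a with hba | hab
  · intro x hx y hy
    obtain rfl : x = y := by linarith [hx.1, hx.2, hy.1, hy.2]
    simp
  obtain ⟨g, w, hg, hgU, hga, hgb⟩ := hU.exists_isGeodesicOn
    (hfU (left_mem_Icc.2 hab.le)) (hfU (right_mem_Icc.2 hab.le)) hab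
  have hfg : EqOn f g (Icc a b) := hf.eqOn hg.isLocalGeodesicOn
    (fun t ht ↦ ⟨U, hU, hUo.mem_nhds (hfU (Ioo_subset_Icc_self ht)),
      hUo.mem_nhds (hgU (Ioo_subset_Icc_self ht))⟩) hga.symm hgb.symm
  obtain rfl : v = w := (hf.congr hfg).speed_unique hg.isLocalGeodesicOn hab
  exact fun x hx y hy ↦ by rw [hfg hx, hfg hy, hg x hx y hy]

end IsLocalGeodesicOn

/-- Every point has a neighbourhood that is a convex region. -/
def IsLocallyConvexMetric (Y : Type*) [MetricSpace Y] : Prop :=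
  ∀ y : Y, ∃ U ∈ 𝓝 y, IsConvexRegion U

namespace IsLocallyConvexMetric

theorem exists_ball (hY : IsLocallyConvexMetric Y) (y : Y) :
    ∃ r > 0, IsConvexRegion (ball y r) := by
  obtain ⟨U, hUy, hU⟩ := hY y
  obtain ⟨r, hr, hsub⟩ := Metric.mem_nhds_iff.1 hUy
  exact ⟨r, hr, hU.ball hsub⟩

theorem exists_forall_ball (hY : IsLocallyConvexMetric Y) {K : Set Y} (hK : IsCompact K) :
    ∃ r > 0, ∀ y ∈ K, IsConvexRegion (ball y r) := by
  choose ρ hρ hball using hY.exists_ball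
  obtain ⟨r, hr, hsub⟩ := lebesgue_number_lemma_of_metric hK (fun y ↦ isOpen_ball (ε := ρ y))
    fun y _ ↦ mem_iUnion.2 ⟨y, mem_ball_self (hρ y)⟩
  exact ⟨r, hr, fun y hy ↦ let ⟨i, hi⟩ := hsub y hy; (hball i).ball hi⟩

theorem exists_eventually_dist_eq (hY : IsLocallyConvexMetric Y) {F : ℕ → ℝ → Y} {V : ℕ → ℝ}
    (hF : ∀ n, IsLocalGeodesicOn (F n) (V n) (Icc a b))
    (hlim : TendstoUniformlyOn F f atTop (Icc a b)) :
    ∃ δ > 0, ∀ᶠ n in atTop, ∀ x ∈ Icc a b, ∀ y ∈ Icc a b, |x - y| ≤ δ →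
      dist (F n x) (F n y) = V n * |x - y| := by
  have hf : ContinuousOn f (Icc a b) :=
    hlim.continuousOn (Frequently.of_forall fun n ↦ (hF n).continuousOn)
  obtain ⟨r, hr, hball⟩ := hY.exists_forall_ball (isCompact_Icc.image_of_continuousOn hf)
  obtain ⟨δ, hδ, hfδ⟩ := Metric.uniformContinuousOn_iff_le.1
    (isCompact_Icc.uniformContinuousOn_of_continuous hf) (r / 3) (by positivity)
  refine ⟨δ, hδ, ?_⟩
  filter_upwards [Metric.tendstoUniformlyOn_iff.1 hlim (r / 3) (by positivity)]
    with n hn x hx y hy hxy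
  have hsub : uIcc x y ⊆ Icc a b := uIcc_subset_Icc hx hy
  have hmaps : MapsTo (F n) (uIcc x y) (ball (f x) r) := fun t ht ↦ by
    have h1 := hn t (hsub ht)
    have h2 := hfδ t (hsub ht) x hx <| by
      rw [abs_sub_comm] at hxy
      exact (abs_sub_left_of_mem_uIcc ht).trans hxy
    rw [mem_ball]
    linarith [dist_triangle_left (F n t) (f x) (f t)]
  exact ((hF n).mono hsub).isGeodesicOn (hball _ (mem_image_of_mem f hx)) isOpen_ball hmaps
    x left_mem_uIcc y right_mem_uIcc

theorem isLocalGeodesicOn_of_tendstoUniformlyOn (hY : IsLocallyConvexMetric Y) {F : ℕ → ℝ → Y}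
    (hab : a < b) (hF : ∀ n, ∃ v, IsLocalGeodesicOn (F n) v (Icc a b))
    (hlim : TendstoUniformlyOn F f atTop (Icc a b)) : ∃ v, IsLocalGeodesicOn f v (Icc a b) := by
  choose V hF using hF
  obtain ⟨δ, hδ, hgeo⟩ := hY.exists_eventually_dist_eq hF hlim
  obtain ⟨h, hh, hle⟩ : ∃ h > 0, h ≤ min δ (b - a) :=
    ⟨_, lt_min hδ (sub_pos.2 hab), le_rfl⟩
  obtain ⟨hhδ, hhb⟩ := le_min_iff.1 hle
  have ha : a ∈ Icc a b := left_mem_Icc.2 hab.le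
  have hah : a + h ∈ Icc a b := ⟨by linarith, by linarith⟩
  have habs : |a + h - a| = h := by rw [add_sub_cancel_left, abs_of_pos hh]
  have htendsto {x y : ℝ} (hx : x ∈ Icc a b) (hy : y ∈ Icc a b) :
      Tendsto (fun n ↦ dist (F n x) (F n y)) atTop (𝓝 (dist (f x) (f y))) :=
    (hlim.tendsto_at hx).dist (hlim.tendsto_at hy)
  refine ⟨dist (f (a + h)) (f a) / h, δ, hδ, fun x hx y hy hxy ↦ ?_⟩
  have hcross : dist (f x) (f y) * h = dist (f (a + h)) (f a) * |x - y| := by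
    refine tendsto_nhds_unique_of_eventuallyEq ((htendsto hx hy).mul_const h)
      ((htendsto hah ha).mul_const |x - y|) (hgeo.mono fun n hn ↦ ?_)
    simp only [hn x hx y hy hxy, hn _ hah a ha (habs.trans_le hhδ), habs]
    ring
  field_simp
  linarith

end IsLocallyConvexMetric

section Shadowing

theorem exists_fixedPoint_closedBall_of_two_mul_dist_le [CompleteSpace Y] {T : Y → Y} {x : Y}
    {r : ℝ} (hr : 0 ≤ r) (hT : MapsTo T (closedBall x r) (closedBall x r))
    (hcontr : ∀ p ∈ closedBall x r, ∀ q ∈ closedBall x r, 2 * dist (T p) (T q) ≤ dist p q) :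
    ∃ q ∈ closedBall x r, T q = q := by
  have hlip : ContractingWith (1 / 2) (hT.restrict T _ _) := by
    refine ⟨by norm_num, LipschitzWith.of_dist_le_mul fun p q ↦ ?_⟩
    have := hcontr p p.2 q q.2
    simp only [Subtype.dist_eq, MapsTo.val_restrict_apply, NNReal.coe_div, NNReal.coe_one,
      NNReal.coe_ofNat]
    linarith
  obtain ⟨q, hq, hfix, -⟩ := hlip.exists_fixedPoint' isClosed_closedBall.isComplete hT
    (mem_closedBall_self hr) (edist_ne_top _ _)
  exact ⟨q, hq, hfix⟩

theorem mem_ball_two_mul {x y z : Y} {η : ℝ} (hxy : dist x y ≤ η) (hyz : dist y z < η) :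
    x ∈ ball z (2 * η) := by
  rw [mem_ball]
  linarith [dist_triangle x y z]

/-- Every point at distance at most `η` from `c b` is the endpoint of a local geodesic on `[a, b]`
which starts at `c a` and stays `η`-close to `c`. -/
def IsShadowable (c : ℝ → Y) (η a b : ℝ) : Prop :=
  ∀ y ∈ closedBall (c b) η, ∃ (f : ℝ → Y) (w : ℝ), IsLocalGeodesicOn f w (Icc a b) ∧ f a = c a ∧
    f b = y ∧ ∀ t ∈ Icc a b, dist (f t) (c t) ≤ η

variable {c : ℝ → Y} {η h : ℝ}

theorem isShadowable_of_forall_dist_lt (hη : 0 < η) (hab : a < b)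
    (hc : IsLocalGeodesicOn c v (Icc a b)) (hball : IsConvexRegion (ball (c a) (2 * η)))
    (hdist : ∀ t ∈ Icc a b, dist (c t) (c a) < η) : IsShadowable c η a b := by
  intro y hy
  have hcU : MapsTo c (Icc a b) (ball (c a) (2 * η)) := fun t ht ↦
    mem_ball_two_mul ((dist_self _).trans_le hη.le) (hdist t ht)
  obtain ⟨f, w, hf, hfU, hfa, hfb⟩ := hball.exists_isGeodesicOn (hcU (left_mem_Icc.2 hab.le))
    (mem_ball_two_mul hy (hdist b (right_mem_Icc.2 hab.le))) hab
  refine ⟨f, w, hf.isLocalGeodesicOn, hfa, hfb, fun t ht ↦ hf.isLocalGeodesicOn.dist_le hc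
    (fun t ht ↦ ?_) (by simpa [hfa] using hη.le) (hfb ▸ hy) ht⟩
  have ht := Ioo_subset_Icc_self ht
  exact ⟨_, hball, isOpen_ball.mem_nhds (hfU ht), isOpen_ball.mem_nhds (hcU ht)⟩

/- For `q` near `c b` let `f` be the local geodesic from `c a` to `q` close to `c`, and let `g` be the
geodesic on `[b - h, b + h]` from `f (b - h)` to `y`. By convexity `q ↦ g b` is a contraction; at
its fixed point `f` and `g` agree at `b`. -/
theorem IsShadowable.exists_overlap [CompleteSpace Y] (hP : IsShadowable c η a b) (hη : 0 < η)
    (hh : 0 < h) (hab : a ≤ b - h) (hc : IsLocalGeodesicOn c v (Icc (b - h) (b + h)))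
    (hball : ∀ t ∈ Icc a b, IsConvexRegion (ball (c t) (2 * η)))
    (hdist : ∀ t ∈ Icc (b - h) (b + h), dist (c t) (c b) < η) {y : Y}
    (hy : y ∈ closedBall (c (b + h)) η) :
    ∃ (f g : ℝ → Y) (w w' : ℝ), IsLocalGeodesicOn f w (Icc a b) ∧ f a = c a ∧
      (∀ t ∈ Icc a b, dist (f t) (c t) ≤ η) ∧ IsLocalGeodesicOn g w' (Icc (b - h) (b + h)) ∧
      MapsTo g (Icc (b - h) (b + h)) (ball (c b) (2 * η)) ∧ g (b - h) = f (b - h) ∧ g b = f b ∧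
      g (b + h) = y := by
  have hab' : a ≤ b := by linarith
  have hU := hball b (right_mem_Icc.2 hab')
  have hcU : MapsTo c (Icc (b - h) (b + h)) (ball (c b) (2 * η)) := fun t ht ↦
    mem_ball_two_mul ((dist_self _).trans_le hη.le) (hdist t ht)
  have hyU : y ∈ ball (c b) (2 * η) := mem_ball_two_mul hy (hdist _ ⟨by linarith, le_rfl⟩)
  choose! F w hF hFa hFb hFc using hP
  have hmem : b - h ∈ Icc a b := ⟨hab, by linarith⟩
  choose! G w' hG hGU hGa hGb using fun q (hq : q ∈ closedBall (c b) η) ↦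
    hU.exists_isGeodesicOn (mem_ball_two_mul (hFc q hq _ hmem) (hdist _ ⟨le_rfl, by linarith⟩))
      hyU (show b - h < b + h by linarith)
  have hmaps : MapsTo (G · b) (closedBall (c b) η) (closedBall (c b) η) := fun q hq ↦ by
    have hmid := hU.two_mul_dist_midpoint_le hh.le (hG q hq) (hGU q hq)
      (hc.isGeodesicOn hU isOpen_ball hcU) hcU
    rw [hGa q hq, hGb q hq] at hmid
    rw [mem_closedBall]
    linarith [hFc q hq _ hmem, mem_closedBall.1 hy]
  obtain ⟨q, hq, hfix⟩ := exists_fixedPoint_closedBall_of_two_mul_dist_le hη.le hmaps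
    fun p hp q hq ↦ by
      have hmid := hU.two_mul_dist_midpoint_le hh.le (hG p hp) (hGU p hp) (hG q hq) (hGU q hq)
      rw [hGa p hp, hGa q hq, hGb p hp, hGb q hq, dist_self, add_zero] at hmid
      refine hmid.trans ((hF p hp).dist_le (hF q hq) (fun t ht ↦ ?_) ?_ ?_ hmem)
      · have ht := Ioo_subset_Icc_self ht
        have hnhds {x : Y} (hx : dist x (c t) ≤ η) : ball (c t) (2 * η) ∈ 𝓝 x :=
          isOpen_ball.mem_nhds (mem_ball_two_mul hx ((dist_self _).trans_lt hη))
        exact ⟨_, hball t ht, hnhds (hFc p hp t ht), hnhds (hFc q hq t ht)⟩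
      · rw [hFa p hp, hFa q hq, dist_self]
        exact dist_nonneg
      · rw [hFb p hp, hFb q hq]
  exact ⟨F q, G q, w q, w' q, hF q hq, hFa q hq, hFc q hq, (hG q hq).isLocalGeodesicOn, hGU q hq,
    hGa q hq, hfix.trans (hFb q hq).symm, hGb q hq⟩

theorem IsShadowable.step [CompleteSpace Y] (hP : IsShadowable c η a b) (hη : 0 < η)
    (hh : 0 < h) (hab : a ≤ b - h) (hc : IsLocalGeodesicOn c v (Icc (b - h) (b + h)))
    (hball : ∀ t ∈ Icc a b, IsConvexRegion (ball (c t) (2 * η)))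
    (hdist : ∀ t ∈ Icc (b - h) (b + h), dist (c t) (c b) < η) : IsShadowable c η a (b + h) := by
  intro y hy
  obtain ⟨f, g, w, w', hf, hfa, hfc, hg, hgU, hleft, hright, hend⟩ :=
    hP.exists_overlap hη hh hab hc hball hdist hy
  have hab' : a ≤ b := by linarith
  have hU := hball b (right_mem_Icc.2 hab')
  have hsubf : Icc (b - h) b ⊆ Icc a b := Icc_subset_Icc_left hab
  have hsubg : Icc (b - h) b ⊆ Icc (b - h) (b + h) := Icc_subset_Icc_right (by linarith)
  have hsubc : Icc b (b + h) ⊆ Icc (b - h) (b + h) := Icc_subset_Icc_left (by linarith)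
  have hfg : EqOn f g (Icc (b - h) b) := by
    refine (hf.mono hsubf).eqOn (hg.mono hsubg) (fun t ht ↦ ?_) hleft.symm hright.symm
    have ht := Ioo_subset_Icc_self ht
    exact ⟨_, hU, isOpen_ball.mem_nhds (mem_ball_two_mul (hfc t (hsubf ht)) (hdist t (hsubg ht))),
      isOpen_ball.mem_nhds (hgU (hsubg ht))⟩
  obtain ⟨k, hk, hkf, hkg⟩ := hf.exists_glue hg hab (by linarith) (by linarith) hfg
  refine ⟨k, w, hk, (hkf (left_mem_Icc.2 hab')).trans hfa,
    (hkg (right_mem_Icc.2 (by linarith))).trans hend, fun t ht ↦ ?_⟩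
  rcases le_total t b with htb | hbt
  · rw [hkf ⟨ht.1, htb⟩]
    exact hfc t ⟨ht.1, htb⟩
  · rw [hkg ⟨by linarith, ht.2⟩]
    refine (hg.mono hsubc).dist_le (hc.mono hsubc) (fun t ht ↦ ?_)
      (hright ▸ hfc b (right_mem_Icc.2 hab')) (hend ▸ hy) ⟨hbt, ht.2⟩
    have ht := hsubc (Ioo_subset_Icc_self ht)
    exact ⟨_, hU, isOpen_ball.mem_nhds (hgU ht), isOpen_ball.mem_nhds
      (mem_ball_two_mul ((dist_self _).trans_le hη.le) (hdist t ht))⟩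

theorem IsLocalGeodesicOn.isShadowable [CompleteSpace Y] (hη : 0 < η)
    (hc : IsLocalGeodesicOn c v (Icc 0 1))
    (hball : ∀ t ∈ Icc (0 : ℝ) 1, IsConvexRegion (ball (c t) (2 * η))) :
    IsShadowable c η 0 1 := by
  obtain ⟨δ, hδ, hcδ⟩ := Metric.uniformContinuousOn_iff.1
    (isCompact_Icc.uniformContinuousOn_of_continuous hc.continuousOn) η hη
  obtain ⟨N, hN⟩ := exists_nat_one_div_lt hδ
  set h : ℝ := 1 / (N + 1) with hh_def
  have hh : 0 < h := by positivity
  have hNh : (N + 1) * h = 1 := by rw [hh_def]; field_simp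
  have key (k : ℕ) (hk : k ≤ N) : IsShadowable c η 0 ((k + 1) * h) := by
    induction k with
    | zero =>
      have hh1 : h ≤ 1 := by nlinarith [N.cast_nonneg (α := ℝ)]
      rw [Nat.cast_zero, zero_add, one_mul]
      exact isShadowable_of_forall_dist_lt hη hh (hc.mono (Icc_subset_Icc_right hh1))
        (hball 0 (by simp)) fun t ht ↦ hcδ t ⟨ht.1, ht.2.trans hh1⟩ 0 (by simp) <| by
          rw [Real.dist_eq, sub_zero, abs_of_nonneg ht.1]
          exact ht.2.trans_lt hN
    | succ k ih =>
      have hle : (k + 1) * h + h ≤ 1 := by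
        have : (k + 1 : ℝ) ≤ N := mod_cast hk
        nlinarith
      have hkh : 0 ≤ k * h := by positivity
      have hsub : Icc ((k + 1) * h - h) ((k + 1) * h + h) ⊆ Icc 0 1 :=
        Icc_subset_Icc (by linarith) hle
      rw [show ((k + 1 : ℕ) + 1 : ℝ) * h = (k + 1) * h + h by push_cast; ring]
      refine (ih (by omega)).step hη hh (by linarith) (hc.mono hsub)
        (fun t ht ↦ hball t ⟨ht.1, by linarith [ht.2]⟩) fun t ht ↦
          hcδ t (hsub ht) _ ⟨by linarith, by linarith⟩ ?_
      rw [Real.dist_eq]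
      exact (abs_sub_le_iff.2 ⟨by linarith [ht.2], by linarith [ht.1]⟩).trans_lt hN
  exact hNh ▸ key N le_rfl

end Shadowing

end Geodesics

section Covering

variable {E B : Type*} [TopologicalSpace E] [TopologicalSpace B] {q : E → B}

theorem isCoveringMap_of_exists_section (hq : IsLocalHomeomorph q) (hsep : IsSeparatedMap q)
    (h : ∀ z, ∃ U : Set B, IsOpen U ∧ z ∈ U ∧ IsPreconnected U ∧
      ∀ e (he : q e ∈ U), ∃ s : U → E, Continuous s ∧ s ⟨q e, he⟩ = e ∧ ∀ u, q (s u) = u) :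
    IsCoveringMap q := by
  intro z
  obtain ⟨U, hUo, hz, hU, hs⟩ := h z
  choose s hs hse hqs using hs
  have : PreconnectedSpace U := Subtype.preconnectedSpace hU
  have hF : DiscreteTopology (q ⁻¹' {z}) := (IsDiscrete.of_openPartialHomeomorph q subset_rfl
    fun e _ ↦ let ⟨φ, hφ, heq⟩ := hq e; ⟨φ, hφ, heq.symm⟩).1
  have hFU (e : q ⁻¹' {z}) : q e ∈ U := e.2.symm ▸ hz
  have hsz (e : q ⁻¹' {z}) : s e (hFU e) ⟨z, hz⟩ = e :=
    (congrArg _ (Subtype.ext e.2.symm)).trans (hse e (hFU e))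
  have huniq {e e' he he'} {u : U} (hu : s e he u = s e' he' u) : s e he = s e' he' :=
    hsep.eq_of_comp_eq hq.isLocallyInjective (hs e he) (hs e' he')
      (funext fun u ↦ (hqs e he u).trans (hqs e' he' u).symm) u hu
  let G (x : U × q ⁻¹' {z}) : q ⁻¹' U :=
    ⟨s x.2 (hFU x.2) x.1, by rw [mem_preimage, hqs]; exact x.1.2⟩
  have hGemb (e : q ⁻¹' {z}) : IsOpenEmbedding fun u ↦ G (u, e) := by
    refine IsOpenEmbedding.of_comp _ (hUo.preimage hq.continuous).isOpenEmbedding_subtypeVal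
      (hq.isOpenEmbedding_of_comp ?_ (hs e (hFU e)))
    convert! hUo.isOpenEmbedding_subtypeVal using 1
    exact funext (hqs e (hFU e))
  have hGbij : G.Bijective := by
    refine ⟨fun x y hxy ↦ ?_, fun e ↦ ?_⟩
    · have hxy' : s x.2 (hFU x.2) x.1 = s y.2 (hFU y.2) y.1 := congrArg Subtype.val hxy
      have hbase : x.1 = y.1 := Subtype.ext <| by
        rw [← hqs x.2 (hFU x.2), hxy', hqs]
      refine Prod.ext hbase (Subtype.ext ?_)
      rw [← hsz x.2, ← hsz y.2, huniq (hbase ▸ hxy')]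
    · let e' : q ⁻¹' {z} := ⟨s e e.2 ⟨z, hz⟩, hqs _ _ _⟩
      refine ⟨(⟨q e, e.2⟩, e'), Subtype.ext ?_⟩
      exact (congrFun (huniq (hsz e')) _).trans (hse e e.2)
  let H := (Equiv.ofBijective G hGbij).toHomeomorphOfContinuousOpen
    (continuous_prod_of_discrete_right.2 fun e ↦ (hGemb e).continuous)
    (isOpenMap_prod_of_discrete_right.2 fun e ↦ (hGemb e).isOpenMap)
  refine ⟨hF, U, hz, hUo, hUo.preimage hq.continuous, H.symm, fun e ↦ ?_⟩
  rw [← hqs, ← congrArg Subtype.val (H.apply_symm_apply e)]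
  rfl

open scoped unitInterval in
theorem bijective_of_isCoveringMap [PathConnectedSpace E] [SimplyConnectedSpace B]
    (hq : IsCoveringMap q) : q.Bijective := by
  refine ⟨fun e e' hee' ↦ ?_, fun y ↦ ?_⟩
  · obtain ⟨γ⟩ := PathConnectedSpace.joined e e'
    let loop : Path (q e) (q e) := (γ.map hq.continuous).cast rfl hee'
    have hloop : (γ : C(I, E)) = hq.liftPath loop e loop.source :=
      (hq.eq_liftPath_iff' _).2 ⟨rfl, γ.source⟩
    calc e = hq.liftPath (Path.refl (q e)) e rfl 1 :=
          (DFunLike.congr_fun (hq.liftPath_const rfl) 1).symm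
      _ = hq.liftPath loop e loop.source 1 := hq.liftPath_apply_one_eq_of_homotopicRel
          (SimplyConnectedSpace.paths_homotopic (Path.refl (q e)) loop) e rfl loop.source
      _ = γ 1 := (DFunLike.congr_fun hloop 1).symm
      _ = e' := γ.target
  · obtain ⟨e⟩ := (inferInstance : Nonempty E)
    obtain ⟨γ⟩ := PathConnectedSpace.joined (q e) y
    obtain ⟨Γ, hΓ, -⟩ := hq.exists_path_lifts γ e γ.source
    exact ⟨Γ 1, (congrFun hΓ 1).trans γ.target⟩

end Covering

section Lifting

/-- `Γ` is a continuous lift of the curve `σ` through `q` on `[0, u]` which starts at `e`. -/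
structure IsLiftOn {E Y : Type*} [TopologicalSpace E] (q : E → Y) (σ : ℝ → Y) (e : E) (u : ℝ)
    (Γ : ℝ → E) : Prop where
  continuousOn : ContinuousOn Γ (Icc 0 u)
  map_zero : Γ 0 = e
  apply_eq : ∀ t ∈ Icc 0 u, q (Γ t) = σ t

namespace IsLiftOn

variable {E Y : Type*} [TopologicalSpace E] {q : E → Y} {σ : ℝ → Y} {e : E} {u w : ℝ} {Γ Γ' : ℝ → E}

theorem mono (hΓ : IsLiftOn q σ e u Γ) (hwu : w ≤ u) : IsLiftOn q σ e w Γ :=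
  ⟨hΓ.continuousOn.mono (Icc_subset_Icc_right hwu), hΓ.map_zero,
    fun t ht ↦ hΓ.apply_eq t ⟨ht.1, ht.2.trans hwu⟩⟩

variable [TopologicalSpace Y]

theorem eqOn [T2Space E] (hq : IsLocalHomeomorph q) (hΓ : IsLiftOn q σ e u Γ)
    (hΓ' : IsLiftOn q σ e u Γ') : EqOn Γ Γ' (Icc 0 u) := by
  rcases lt_or_ge u 0 with hu | hu
  · simp [Icc_eq_empty hu.not_ge]
  · exact (T2Space.isSeparatedMap q).eqOn_of_comp_eqOn hq.isLocallyInjective isPreconnected_Icc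
      hΓ.continuousOn hΓ'.continuousOn
      (fun t ht ↦ (hΓ.apply_eq t ht).trans (hΓ'.apply_eq t ht).symm) (left_mem_Icc.2 hu)
      (hΓ.map_zero.trans hΓ'.map_zero.symm)

theorem exists_extend (hΓ : IsLiftOn q σ e w Γ) (hσ : Continuous σ) (hw : 0 ≤ w)
    {φ : OpenPartialHomeomorph E Y} (hφ : q = φ) (hΓw : Γ w ∈ φ.source)
    (hσφ : MapsTo σ (Icc w u) φ.target) : ∃ Γ', IsLiftOn q σ e u Γ' := by
  have hglue : Γ w = φ.symm (σ w) := by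
    rw [← hΓ.apply_eq w (right_mem_Icc.2 hw), hφ, φ.left_inv hΓw]
  let Γ' : ℝ → E := fun t ↦ if t ≤ w then Γ t else φ.symm (σ t)
  have hleft : EqOn Γ' Γ (Icc 0 w) := fun t ht ↦ if_pos ht.2
  have hright : EqOn Γ' (φ.symm ∘ σ) (Icc w u) := fun t ht ↦ by
    rcases ht.1.eq_or_lt with rfl | hwt
    · exact (if_pos le_rfl).trans hglue
    · exact if_neg hwt.not_ge
  have hcont : ContinuousOn Γ' (Icc 0 w ∪ Icc w u) :=
    (hΓ.continuousOn.congr hleft).union_of_isClosed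
      ((φ.continuousOn_symm.comp hσ.continuousOn hσφ).congr hright) isClosed_Icc isClosed_Icc
  have hcover : Icc 0 u ⊆ Icc 0 w ∪ Icc w u := Icc_subset_Icc_union_Icc
  refine ⟨Γ', hcont.mono hcover, (hleft (left_mem_Icc.2 hw)).trans hΓ.map_zero, fun t ht ↦ ?_⟩
  rcases hcover ht with ht | ht
  · rw [hleft ht, hΓ.apply_eq t ht]
  · rw [hright ht, hφ]
    exact φ.right_inv (hσφ ht)

end IsLiftOn

end Lifting

section LocalIsometry

variable {E Y : Type*} [MetricSpace E] [MetricSpace Y] {q : E → Y}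

/-- `q` preserves distances near every point. Unlike for the local isometries of Riemannian
geometry, openness is not included. -/
def IsLocallyIsometric (q : E → Y) : Prop :=
  ∀ e, ∃ V ∈ 𝓝 e, ∀ a ∈ V, ∀ b ∈ V, dist (q a) (q b) = dist a b

namespace IsLocallyIsometric

variable {σ : ℝ → Y} {e : E} {u : ℝ} {K : ℝ≥0}

theorem isLocalHomeomorph (hiso : IsLocallyIsometric q) (hq : IsOpenMap q) :
    IsLocalHomeomorph q := by
  refine isLocalHomeomorph_iff_isOpenEmbedding_restrict.2 fun e ↦ ?_
  obtain ⟨V, hV, hqV⟩ := hiso e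
  obtain ⟨U, hUV, hU, heU⟩ := _root_.mem_nhds_iff.1 hV
  have hisom : Isometry (U.domRestrict q) :=
    Isometry.of_dist_eq fun a b ↦ hqV a (hUV a.2) b (hUV b.2)
  exact ⟨U, hU.mem_nhds heU, .of_continuous_injective_isOpenMap hisom.continuous hisom.injective
    (hq.domRestrict hU)⟩

theorem lipschitzOnWith_lift (hiso : IsLocallyIsometric q) (hσ : LipschitzWith K σ) {Γ : ℝ → E}
    (hΓ : IsLiftOn q σ e u Γ) : LipschitzOnWith K Γ (Icc 0 u) := by
  refine lipschitzOnWith_Icc_of_locally fun x hx ↦ ?_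
  obtain ⟨V, hV, hqV⟩ := hiso (Γ x)
  refine ⟨_, inter_mem (hΓ.continuousOn x hx hV) self_mem_nhdsWithin, fun s hs t ht ↦ ?_⟩
  rw [edist_dist, ← hqV _ hs.1 _ ht.1, hΓ.apply_eq s hs.2, hΓ.apply_eq t ht.2, ← edist_dist]
  exact hσ s t

-- The endpoints of the partial lifts are Lipschitz in `w`, so by completeness they converge as
-- `w → u`, and a chart of `q` at their limit extends the lift beyond `u`.
theorem exists_lift_gt_of_mem_closure [CompleteSpace E] (hiso : IsLocallyIsometric q)
    (hq : IsLocalHomeomorph q) (hσ : LipschitzWith K σ)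
    (hu : u ∈ closure {w | 0 ≤ w ∧ ∃ Γ, IsLiftOn q σ e w Γ}) :
    ∃ u' > u, ∃ Γ, IsLiftOn q σ e u' Γ := by
  set S := {w | 0 ≤ w ∧ ∃ Γ, IsLiftOn q σ e w Γ}
  have : Nonempty E := ⟨e⟩
  choose! Γ hΓ using fun w (hw : w ∈ S) ↦ hw.2
  have hlip : LipschitzOnWith K (fun w ↦ Γ w w) S := .of_dist_le_mul fun w hw w' hw' ↦ by
    wlog hle : w ≤ w' generalizing w w'
    · rw [dist_comm, dist_comm w]
      exact this w' hw' w hw (le_of_not_ge hle)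
    rw [(hΓ w hw).eqOn hq ((hΓ w' hw').mono hle) (right_mem_Icc.2 hw.1)]
    exact (hiso.lipschitzOnWith_lift hσ (hΓ w' hw')).dist_le_mul w ⟨hw.1, hle⟩ w'
      (right_mem_Icc.2 hw'.1)
  have : (𝓝[S] u).NeBot := mem_closure_iff_nhdsWithin_neBot.1 hu
  obtain ⟨e', he'⟩ : ∃ e', Tendsto (fun w ↦ Γ w w) (𝓝[S] u) (𝓝 e') :=
    CompleteSpace.complete ((cauchy_nhds.mono nhdsWithin_le_nhds).map_of_le
      hlip.uniformContinuousOn inf_le_right)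
  have hqe' : q e' = σ u := tendsto_nhds_unique_of_eventuallyEq
    ((hq.continuous.tendsto e').comp he') (hσ.continuous.continuousWithinAt (s := S))
    (eventually_mem_nhdsWithin.mono fun w hw ↦ (hΓ w hw).apply_eq w (right_mem_Icc.2 hw.1))
  obtain ⟨φ, he'φ, hφ⟩ := hq e'
  have hσu : σ ⁻¹' φ.target ∈ 𝓝 u := hσ.continuous.continuousAt.preimage_mem_nhds <|
    φ.open_target.mem_nhds (hqe' ▸ hφ ▸ φ.map_source he'φ)
  obtain ⟨ρ, hρ, hball⟩ := Metric.nhds_basis_closedBall.mem_iff.1 hσu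
  obtain ⟨w, hwS, hwφ, hwρ⟩ := (eventually_mem_nhdsWithin.and
    ((he'.eventually (φ.open_source.mem_nhds he'φ)).and
      ((eventually_ge_nhds (sub_lt_self u hρ)).filter_mono nhdsWithin_le_nhds))).exists
  rw [Real.closedBall_eq_Icc] at hball
  exact ⟨u + ρ, by linarith, (hΓ w hwS).exists_extend hσ.continuous hwS.1 hφ hwφ
    fun t ht ↦ hball ⟨hwρ.trans ht.1, ht.2⟩⟩

theorem exists_lift [CompleteSpace E] (hiso : IsLocallyIsometric q) (hq : IsLocalHomeomorph q)
    (hu : 0 ≤ u) (hσ : LipschitzOnWith K σ (Icc 0 u)) (he : q e = σ 0) :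
    ∃ Γ, IsLiftOn q σ e u Γ := by
  let σ' : ℝ → Y := IccExtend hu ((Icc 0 u).domRestrict σ)
  have hσ' : LipschitzWith K σ' := mul_one K ▸
    hσ.to_restrict.comp (LipschitzWith.projIcc hu)
  have heq : EqOn σ' σ (Icc 0 u) := fun t ht ↦ IccExtend_of_mem hu _ ht
  obtain ⟨Γ, hΓ⟩ : ∃ Γ, IsLiftOn q σ' e u Γ := by
    by_contra! hnot
    set S := {w | 0 ≤ w ∧ ∃ Γ, IsLiftOn q σ' e w Γ}
    have h0 : 0 ∈ S := ⟨le_rfl, fun _ ↦ e, continuousOn_const, rfl, fun t ht ↦ by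
      rw [le_antisymm ht.2 ht.1, he, heq (left_mem_Icc.2 hu)]⟩
    have hbdd : BddAbove S := ⟨u, fun w hw ↦ by
      obtain ⟨_, Γ, hΓ⟩ := hw
      by_contra! huw
      exact hnot Γ (hΓ.mono huw.le)⟩
    obtain ⟨u', hu', hlift⟩ :=
      hiso.exists_lift_gt_of_mem_closure hq hσ' (csSup_mem_closure ⟨0, h0⟩ hbdd)
    exact (le_csSup hbdd ⟨(le_csSup hbdd h0).trans hu'.le, hlift⟩).not_gt hu'
  exact ⟨Γ, hΓ.continuousOn, hΓ.map_zero, fun t ht ↦ (hΓ.apply_eq t ht).trans (heq ht)⟩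

-- The section is `y ↦ Γ y 1`, where `Γ y` lifts the geodesic of `U` from `q e` to `y`. By convexity
-- these geodesics, hence their lifts, depend continuously on `y`.
open scoped unitInterval in
theorem exists_section [CompleteSpace E] (hiso : IsLocallyIsometric q) (hq : IsLocalHomeomorph q)
    {U : Set Y} (hU : IsConvexRegion U) (he : q e ∈ U) :
    ∃ s : U → E, Continuous s ∧ s ⟨q e, he⟩ = e ∧ ∀ y, q (s y) = y := by
  choose γ hγ0 hγ1 hγU using fun y : U ↦ hU.1 (q e) he y y.2
  choose v hv using fun y ↦ (hγU y).2
  have hγlip (y : U) : LipschitzOnWith (v y).toNNReal (γ y) (Icc 0 1) :=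
    (IsGeodesicOn.isLocalGeodesicOn (hv y)).lipschitzOnWith
  have hγdist (t : I) : LipschitzWith 1 fun y ↦ γ y t := .of_dist_le_mul fun y y' ↦ by
    have := hU.2 _ _ (hγU y) (hγU y') t t.2
    rw [hγ0, hγ0, hγ1, hγ1, dist_self, mul_zero, zero_add] at this
    rw [NNReal.coe_one, one_mul]
    exact this.trans (mul_le_of_le_one_left dist_nonneg t.2.2)
  let H : C(I × U, Y) := ⟨fun x ↦ γ x.2 x.1, continuous_prod_of_continuous_lipschitzWith' _ 1
    hγdist fun y ↦ continuousOn_iff_continuous_domRestrict.1 (hγlip y).continuousOn⟩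
  choose Γ hΓ using fun y ↦ hiso.exists_lift hq zero_le_one (hγlip y) (hγ0 y).symm
  have hΓcont (y : U) : Continuous fun t : I ↦ Γ y t :=
    continuousOn_iff_continuous_domRestrict.1 (hΓ y).continuousOn
  have hcont : Continuous fun x : I × U ↦ Γ x.2 x.1 :=
    hq.continuous_lift (T2Space.isSeparatedMap q) H
      (funext fun x ↦ (hΓ x.2).apply_eq x.1 x.1.2)
      (by simpa only [Icc.coe_zero, (hΓ _).map_zero] using continuous_const) hΓcont
  refine ⟨fun y ↦ Γ y 1, hcont.comp (.prodMk_right (1 : I)), ?_, fun y ↦ ?_⟩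
  · have hv0 : v ⟨q e, he⟩ = 0 := by
      have := hv ⟨q e, he⟩ 0 (left_mem_Icc.2 zero_le_one) 1 (right_mem_Icc.2 zero_le_one)
      rwa [hγ0, hγ1, dist_self, zero_sub, abs_neg, abs_one, mul_one, eq_comm] at this
    have hconst : IsLiftOn q (γ ⟨q e, he⟩) e 1 fun _ ↦ e := ⟨continuousOn_const, rfl,
      fun t ht ↦ by
        have := hv ⟨q e, he⟩ 0 (left_mem_Icc.2 zero_le_one) t ht
        rwa [hv0, zero_mul, hγ0, dist_eq_zero] at this⟩
    exact (hΓ _).eqOn hq hconst (right_mem_Icc.2 zero_le_one)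
  · rw [(hΓ y).apply_eq 1 (right_mem_Icc.2 zero_le_one), hγ1]

theorem isCoveringMap [CompleteSpace E] (hiso : IsLocallyIsometric q) (hq : IsLocalHomeomorph q)
    (hY : IsLocallyConvexMetric Y) (hlen : IsLengthSpace Y) : IsCoveringMap q :=
  isCoveringMap_of_exists_section hq (T2Space.isSeparatedMap q) fun z ↦
    let ⟨r, hr, hball⟩ := hY.exists_ball z
    ⟨ball z r, isOpen_ball, mem_ball_self hr, hlen.isPreconnected_ball z r,
      fun _ he ↦ hiso.exists_section hq hball he⟩

end IsLocallyIsometric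

end LocalIsometry

section SpaceOfGeodesics

open scoped unitInterval

variable {Y : Type*} [MetricSpace Y] {a : Y} {f : ℝ → Y} {v : ℝ}

/-- The local geodesics `[0, 1] → Y` issuing from `a`, with the metric of uniform convergence. -/
def localGeodesicsFrom (a : Y) : Set C(I, Y) :=
  {c | c 0 = a ∧ ∃ v, IsLocalGeodesicOn (IccExtend zero_le_one c) v (Icc 0 1)}

/-- The endpoint map of the space of local geodesics from `a`; it plays the role of the exponential
map at `a`. -/
def endpoint (a : Y) (c : localGeodesicsFrom a) : Y := c.1 1

theorem IsLocalGeodesicOn.exists_mem_localGeodesicsFrom (hf : IsLocalGeodesicOn f v (Icc 0 1))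
    (hf0 : f 0 = a) : ∃ c ∈ localGeodesicsFrom a, ∀ t : I, c t = f t := by
  refine ⟨⟨(Icc 0 1).domRestrict f, continuousOn_iff_continuous_domRestrict.1 hf.continuousOn⟩,
    ⟨hf0, v, hf.congr fun t ht ↦ ?_⟩, fun t ↦ rfl⟩
  exact (IccExtend_of_mem zero_le_one ((Icc 0 1).domRestrict f) ht).symm

theorem IsLocallyConvexMetric.isClosed_localGeodesicsFrom (hY : IsLocallyConvexMetric Y) (a : Y) :
    IsClosed (localGeodesicsFrom a) := by
  refine IsSeqClosed.isClosed fun c c' hc hlim ↦ ?_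
  have hunif := ContinuousMap.tendsto_iff_tendstoUniformly.1 hlim
  refine ⟨tendsto_nhds_unique (hunif.tendsto_at 0) ?_, ?_⟩
  · simp only [(hc _).1, tendsto_const_nhds]
  · exact hY.isLocalGeodesicOn_of_tendstoUniformlyOn zero_lt_one (fun n ↦ (hc n).2)
      (hunif.comp (projIcc 0 1 zero_le_one)).tendstoUniformlyOn

theorem IsLocallyConvexMetric.completeSpace_localGeodesicsFrom [CompleteSpace Y]
    (hY : IsLocallyConvexMetric Y) (a : Y) : CompleteSpace (localGeodesicsFrom a) :=
  (hY.isClosed_localGeodesicsFrom a).completeSpace_coe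

-- Rescaling the parameter joins every local geodesic to the constant curve.
theorem isPathConnected_localGeodesicsFrom (a : Y) : IsPathConnected (localGeodesicsFrom a) := by
  refine ⟨.const I a, ⟨rfl, 0, 1, one_pos, by simp [IccExtend]⟩, fun {c} hc ↦ ?_⟩
  let scale : C(I, C(I, Y)) :=
    (c.comp ⟨fun x : I × I ↦ x.1 * x.2, by fun_prop⟩).curry
  obtain ⟨hc0, v, hv⟩ := hc
  refine ⟨⟨scale, ?_, ?_⟩, fun s ↦ ⟨?_, v * |(s : ℝ)|, ?_⟩⟩
  · ext t
    simp [scale, hc0]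
  · ext t
    simp [scale]
  · simp [scale, hc0]
  · have hmaps : MapsTo (fun t : ℝ ↦ s * t + 0) (Icc 0 1) (Icc 0 1) := fun t ht ↦ by
      simpa only [add_zero] using unitInterval.mul_mem s.2 ht
    refine (hv.comp_affine hmaps).congr fun t ht ↦ ?_
    refine (IccExtend_of_mem zero_le_one c (hmaps ht)).trans (Eq.symm ?_)
    exact (IccExtend_of_mem zero_le_one _ ht).trans (congrArg c (Subtype.ext (add_zero _).symm))

theorem IsLocallyConvexMetric.exists_forall_dist_le_mul (hY : IsLocallyConvexMetric Y)
    (c : localGeodesicsFrom a) : ∃ ε > 0, ∀ c₁ ∈ ball c ε, ∀ c₂ ∈ ball c ε, ∀ t : I,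
      dist (c₁.1 t) (c₂.1 t) ≤ t * dist (endpoint a c₁) (endpoint a c₂) := by
  obtain ⟨ε, hε, hball⟩ := hY.exists_forall_ball (isCompact_range c.1.continuous)
  refine ⟨ε, hε, fun c₁ hc₁ c₂ hc₂ t ↦ ?_⟩
  obtain ⟨hc₁0, v, hv⟩ := c₁.2
  obtain ⟨hc₂0, w, hw⟩ := c₂.2
  have hmem {c' : localGeodesicsFrom a} (hc' : c' ∈ ball c ε) (t : I) :
      ball (c.1 t) ε ∈ 𝓝 (c'.1 t) :=
    isOpen_ball.mem_nhds ((ContinuousMap.dist_apply_le_dist t).trans_lt hc')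
  have := hv.dist_le_mul hw
    (fun t _ ↦
      ⟨_, hball _ (mem_range_self _), hmem hc₁ (projIcc 0 1 zero_le_one t), hmem hc₂ _⟩)
    (by simp [hc₁0, hc₂0]) t.2
  simpa [endpoint] using this

theorem IsLocallyConvexMetric.isLocallyIsometric_endpoint (hY : IsLocallyConvexMetric Y) (a : Y) :
    IsLocallyIsometric (endpoint a) := by
  intro c
  obtain ⟨ε, hε, hdist⟩ := hY.exists_forall_dist_le_mul c
  refine ⟨ball c ε, ball_mem_nhds c hε, fun c₁ hc₁ c₂ hc₂ ↦ le_antisymm ?_ ?_⟩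
  · exact ContinuousMap.dist_apply_le_dist (f := c₁.1) (g := c₂.1) 1
  · exact (ContinuousMap.dist_le dist_nonneg).2 fun t ↦
      (hdist c₁ hc₁ c₂ hc₂ t).trans (mul_le_of_le_one_left dist_nonneg t.2.2)

theorem IsLocallyConvexMetric.isOpenMap_endpoint [CompleteSpace Y] (hY : IsLocallyConvexMetric Y)
    (a : Y) : IsOpenMap (endpoint a) := by
  refine isOpenMap_iff_nhds_le.2 fun c N hN ↦ ?_
  obtain ⟨ε, hε, hN⟩ := Metric.nhds_basis_closedBall.mem_iff.1 hN
  obtain ⟨r, hr, hball⟩ := hY.exists_forall_ball (isCompact_range c.1.continuous)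
  obtain ⟨hc0, v, hv⟩ := c.2
  have hη : 0 < min ε (r / 2) := lt_min hε (half_pos hr)
  have hshadow := hv.isShadowable hη fun t _ ↦ (hball _ (mem_range_self _)).ball
    (ball_subset_ball (by linarith [min_le_right ε (r / 2)]))
  refine mem_of_superset (closedBall_mem_nhds _ hη) fun y hy ↦ ?_
  obtain ⟨f, w, hf, hf0, hf1, hfc⟩ := hshadow y (by simpa [endpoint] using hy)
  obtain ⟨c', hc', hc'f⟩ := hf.exists_mem_localGeodesicsFrom (a := a) (by simpa [hc0] using hf0)
  have hdist : dist c' c.1 ≤ ε := (ContinuousMap.dist_le hε.le).2 fun t ↦ by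
    simpa [hc'f] using (hfc t t.2).trans (min_le_left _ _)
  have hN' : c' 1 ∈ N := hN (show ⟨c', hc'⟩ ∈ closedBall c ε from hdist)
  rwa [hc'f, Icc.coe_one, hf1] at hN'

end SpaceOfGeodesics

section Global

variable {Y : Type*} [MetricSpace Y] [CompleteSpace Y] [SimplyConnectedSpace Y]
  {f g : ℝ → Y} {v w t : ℝ}

theorem bijective_endpoint (hY : IsLocallyConvexMetric Y) (hlen : IsLengthSpace Y) (a : Y) :
    (endpoint a).Bijective := by
  have hiso := hY.isLocallyIsometric_endpoint a
  have := hY.completeSpace_localGeodesicsFrom a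
  have := isPathConnected_iff_pathConnectedSpace.1 (isPathConnected_localGeodesicsFrom a)
  exact bijective_of_isCoveringMap
    (hiso.isCoveringMap (hiso.isLocalHomeomorph (hY.isOpenMap_endpoint a)) hY hlen)

theorem exists_isLocalGeodesicOn (hY : IsLocallyConvexMetric Y) (hlen : IsLengthSpace Y)
    (a b : Y) : ∃ f v, IsLocalGeodesicOn f v (Icc 0 1) ∧ f 0 = a ∧ f 1 = b := by
  obtain ⟨⟨c, hc0, v, hv⟩, rfl⟩ := (bijective_endpoint hY hlen a).2 b
  exact ⟨_, v, hv, (IccExtend_left _ _).trans hc0, IccExtend_right _ _⟩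

namespace IsLocalGeodesicOn

theorem eqOn_of_simplyConnected (hY : IsLocallyConvexMetric Y) (hlen : IsLengthSpace Y)
    (hf : IsLocalGeodesicOn f v (Icc 0 1)) (hg : IsLocalGeodesicOn g w (Icc 0 1))
    (h0 : f 0 = g 0) (h1 : f 1 = g 1) : EqOn f g (Icc 0 1) := fun t ht ↦ by
  obtain ⟨c, hc, hcf⟩ := hf.exists_mem_localGeodesicsFrom h0
  obtain ⟨c', hc', hcg⟩ := hg.exists_mem_localGeodesicsFrom rfl
  have hend : endpoint (g 0) ⟨c, hc⟩ = endpoint (g 0) ⟨c', hc'⟩ := by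
    simp only [endpoint, hcf, hcg, Icc.coe_one, h1]
  obtain rfl : c = c' := congrArg Subtype.val ((bijective_endpoint hY hlen (g 0)).1 hend)
  exact (hcf ⟨t, ht⟩).symm.trans (hcg ⟨t, ht⟩)

theorem dist_le_mul_of_simplyConnected (hY : IsLocallyConvexMetric Y) (hlen : IsLengthSpace Y)
    (hf : IsLocalGeodesicOn f v (Icc 0 1)) (hg : IsLocalGeodesicOn g w (Icc 0 1))
    (h0 : f 0 = g 0) (ht : t ∈ Icc 0 1) : dist (f t) (g t) ≤ t * dist (f 1) (g 1) := by
  obtain ⟨c, hc, hcf⟩ := hf.exists_mem_localGeodesicsFrom h0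
  obtain ⟨c', hc', hcg⟩ := hg.exists_mem_localGeodesicsFrom rfl
  let ψ := Equiv.ofBijective _ (bijective_endpoint hY hlen (g 0))
  have hψ : LipschitzWith ⟨t, ht.1⟩ fun y ↦ (ψ.symm y).1 ⟨t, ht⟩ := by
    refine hlen.lipschitzWith_of_locally fun y ↦ ?_
    obtain ⟨ε, hε, hdist⟩ := hY.exists_forall_dist_le_mul (ψ.symm y)
    refine ⟨ψ '' ball (ψ.symm y) ε, ?_, LipschitzOnWith.of_dist_le_mul ?_⟩
    · have := (hY.isOpenMap_endpoint (g 0)).image_mem_nhds (ball_mem_nhds (ψ.symm y) hε)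
      rwa [show endpoint (g 0) (ψ.symm y) = y from ψ.apply_symm_apply y] at this
    · rintro _ ⟨c₁, hc₁, rfl⟩ _ ⟨c₂, hc₂, rfl⟩
      rw [ψ.symm_apply_apply, ψ.symm_apply_apply]
      exact hdist c₁ hc₁ c₂ hc₂ ⟨t, ht⟩
  have hψf : ψ.symm (f 1) = ⟨c, hc⟩ := ψ.symm_apply_eq.2 (by simp [ψ, endpoint, hcf])
  have hψg : ψ.symm (g 1) = ⟨c', hc'⟩ := ψ.symm_apply_eq.2 (by simp [ψ, endpoint, hcg])
  calc dist (f t) (g t)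
      = dist ((ψ.symm (f 1)).1 ⟨t, ht⟩) ((ψ.symm (g 1)).1 ⟨t, ht⟩) := by rw [hψf, hψg, hcf, hcg]
    _ ≤ t * dist (f 1) (g 1) := hψ.dist_le_mul _ _

theorem isGeodesicOn_of_simplyConnected (hY : IsLocallyConvexMetric Y) (hlen : IsLengthSpace Y)
    (hf : IsLocalGeodesicOn f v (Icc 0 1)) : IsGeodesicOn f v (Icc 0 1) := by
  intro x hx y hy
  refine le_antisymm ?_ ?_
  · rw [← Real.coe_toNNReal v (hf.speed_nonneg zero_lt_one), ← Real.dist_eq]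
    exact hf.lipschitzOnWith.dist_le_mul x hx y hy
  · obtain ⟨δ, hδ, hfδ⟩ := id hf
    obtain ⟨τ, hτ0, hτ⟩ : ∃ τ > 0, τ ≤ min δ 1 := ⟨_, lt_min hδ one_pos, le_rfl⟩
    obtain ⟨hτδ, hτ1⟩ := le_min_iff.1 hτ
    have hmaps {k : ℝ} (hk : k ∈ Icc 0 1) : MapsTo (fun t ↦ k * t + 0) (Icc 0 1) (Icc 0 1) :=
      fun t ht ↦ by simpa only [add_zero] using unitInterval.mul_mem hk ht
    have hle := dist_le_mul_of_simplyConnected hY hlen (hf.comp_affine (hmaps hx))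
      (hf.comp_affine (hmaps hy)) (by simp only [mul_zero]) ⟨hτ0.le, hτ1⟩
    simp only [add_zero, mul_one] at hle
    have hscale : |x * τ - y * τ| = τ * |x - y| := by
      rw [← sub_mul, abs_mul, abs_of_pos hτ0, mul_comm]
    have hmem {z : ℝ} (hz : z ∈ Icc 0 1) : z * τ ∈ Icc 0 1 :=
      unitInterval.mul_mem hz ⟨hτ0.le, hτ1⟩
    rw [hfδ _ (hmem hx) _ (hmem hy) ?_, hscale] at hle
    · exact le_of_mul_le_mul_left (by linarith) hτ0
    · have := abs_sub_le_of_le_of_le hx.1 hx.2 hy.1 hy.2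
      exact hscale ▸ (mul_le_of_le_one_right hτ0.le (by linarith)).trans hτδ

theorem dist_le_of_simplyConnected (hY : IsLocallyConvexMetric Y) (hlen : IsLengthSpace Y)
    (hf : IsLocalGeodesicOn f v (Icc 0 1)) (hg : IsLocalGeodesicOn g w (Icc 0 1))
    (ht : t ∈ Icc 0 1) : dist (f t) (g t) ≤ (1 - t) * dist (f 0) (g 0) + t * dist (f 1) (g 1) := by
  obtain ⟨h, u, hh, hh0, hh1⟩ := exists_isLocalGeodesicOn hY hlen (f 0) (g 1)
  have hmaps : MapsTo (fun t : ℝ ↦ -1 * t + 1) (Icc 0 1) (Icc 0 1) := fun t ht ↦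
    ⟨by linarith [ht.2], by linarith [ht.1]⟩
  have hfh := dist_le_mul_of_simplyConnected hY hlen hf hh hh0.symm ht
  have hhg := dist_le_mul_of_simplyConnected hY hlen (hh.comp_affine hmaps) (hg.comp_affine hmaps)
    (by simpa using hh1) (t := 1 - t) ⟨by linarith [ht.2], by linarith [ht.1]⟩
  simp only [neg_mul, one_mul, neg_add_cancel, neg_sub, sub_add_cancel, hh0] at hhg
  rw [hh1] at hfh
  linarith [dist_triangle (f t) (h t) (g t)]

end IsLocalGeodesicOn

theorem exists_isGeodesicSeg_unique (hY : IsLocallyConvexMetric Y) (hlen : IsLengthSpace Y)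
    (a b : Y) : ∃ γ, IsGeodesicSeg γ a b ∧
      ∀ γ', IsGeodesicSeg γ' a b → EqOn γ γ' (Icc 0 1) := by
  obtain ⟨γ, v, hγ, hγ0, hγ1⟩ := exists_isLocalGeodesicOn hY hlen a b
  have hgeo := hγ.isGeodesicOn_of_simplyConnected hY hlen
  have hv : v = dist a b := by
    have := hgeo 0 (left_mem_Icc.2 zero_le_one) 1 (right_mem_Icc.2 zero_le_one)
    simpa [hγ0, hγ1, eq_comm] using this
  exact ⟨γ, ⟨hγ0, hγ1, hv ▸ hgeo⟩, fun γ' ⟨hγ'0, hγ'1, hγ'⟩ ↦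
    hγ.eqOn_of_simplyConnected hY hlen (IsGeodesicOn.isLocalGeodesicOn hγ') (hγ0.trans hγ'0.symm)
      (hγ1.trans hγ'1.symm)⟩

end Global

section CoveringSpace

variable {X Y : Type*} [MetricSpace X] [MetricSpace Y] {p : Y → X}

theorem IsConvexRegion.of_image {U : Set Y} (hU : IsConvexRegion (p '' U))
    (hp : ∀ a ∈ U, ∀ b ∈ U, dist (p a) (p b) = dist a b) : IsConvexRegion U := by
  have hinj : InjOn p U := fun a ha b hb hab ↦ by
    rw [← dist_eq_zero, ← hp a ha b hb, hab, dist_self]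
  have himage {γ : ℝ → Y} (hγ : IsGeodesicIn U γ) : IsGeodesicIn (p '' U) (p ∘ γ) := by
    obtain ⟨hγU, v, hv⟩ := hγ
    exact ⟨fun t ht ↦ mem_image_of_mem p (hγU t ht), v, fun s hs t ht ↦
      (hp _ (hγU s hs) _ (hγU t ht)).trans (hv s hs t ht)⟩
  refine ⟨fun a ha b hb ↦ ?_, fun γ₁ γ₂ h₁ h₂ t ht ↦ ?_⟩
  · have : Nonempty Y := ⟨a⟩
    obtain ⟨γ, hγ0, hγ1, hγU, v, hv⟩ := hU.1 _ (mem_image_of_mem p ha) _ (mem_image_of_mem p hb)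
    have hmem {t : ℝ} (ht : t ∈ Icc 0 1) : Function.invFunOn p U (γ t) ∈ U :=
      Function.invFunOn_mem (hγU t ht)
    refine ⟨Function.invFunOn p U ∘ γ, ?_, ?_, fun t ht ↦ hmem ht, v, fun s hs t ht ↦ ?_⟩
    · rw [Function.comp_apply, hγ0, hinj.leftInvOn_invFunOn ha]
    · rw [Function.comp_apply, hγ1, hinj.leftInvOn_invFunOn hb]
    · rw [Function.comp_apply, Function.comp_apply, ← hp _ (hmem hs) _ (hmem ht),
        Function.invFunOn_eq (hγU s hs), Function.invFunOn_eq (hγU t ht), hv s hs t ht]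
  · have := hU.2 _ _ (himage h₁) (himage h₂) t ht
    have h0 : (0 : ℝ) ∈ Icc 0 1 := left_mem_Icc.2 zero_le_one
    have h1 : (1 : ℝ) ∈ Icc 0 1 := right_mem_Icc.2 zero_le_one
    simpa only [Function.comp_apply, hp _ (h₁.1 _ ht) _ (h₂.1 _ ht), hp _ (h₁.1 _ h0) _ (h₂.1 _ h0),
      hp _ (h₁.1 _ h1) _ (h₂.1 _ h1)] using this

theorem IsLocallyConvexMetric.of_isLocallyIsometric (hX : IsLocallyConvexMetric X)
    (hiso : IsLocallyIsometric p) (hp : IsLocalHomeomorph p) : IsLocallyConvexMetric Y := by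
  intro y
  obtain ⟨V, hV, hpV⟩ := hiso y
  obtain ⟨U, hU, hconv⟩ := hX (p y)
  obtain ⟨r, hr, hball⟩ := Metric.mem_nhds_iff.1 (inter_mem hU (hp.isOpenMap.image_mem_nhds hV))
  have himage : p '' (V ∩ p ⁻¹' ball (p y) r) = ball (p y) r := by
    rw [image_inter_preimage, inter_eq_right]
    exact hball.trans inter_subset_right
  refine ⟨V ∩ p ⁻¹' ball (p y) r,
    inter_mem hV (hp.continuous.continuousAt.preimage_mem_nhds (ball_mem_nhds _ hr)),
    IsConvexRegion.of_image (himage ▸ hconv.ball (hball.trans inter_subset_left)) ?_⟩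
  exact fun a ha b hb ↦ hpV a ha.1 b hb.1

theorem IsLocallyIsometric.lipschitzWith (hiso : IsLocallyIsometric p) (hlen : IsLengthSpace Y) :
    LipschitzWith 1 p :=
  hlen.lipschitzWith_of_locally fun y ↦
    let ⟨V, hV, hpV⟩ := hiso y
    ⟨V, hV, .of_dist_le_mul fun a ha b hb ↦ by rw [hpV a ha b hb, NNReal.coe_one, one_mul]⟩

-- A preconnected set lying over an evenly covered set meets only one sheet.
theorem exists_tendsto_of_isCoveringMap {E B : Type*} [TopologicalSpace E] [TopologicalSpace B]
    {q : E → B} (hq : IsCoveringMap q) (x : B) :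
    ∃ U ∈ 𝓝 x, ∀ S : Set E, IsPreconnected S → MapsTo q S U → ∀ u : ℕ → E, (∀ n, u n ∈ S) →
      Tendsto (q ∘ u) atTop (𝓝 x) → ∃ e, Tendsto u atTop (𝓝 e) := by
  obtain ⟨_, U, hxU, hU, -, H, hH⟩ := hq x
  refine ⟨U, hU.mem_nhds hxU, fun S hS hSU u hu hlim ↦ ?_⟩
  let sheet (e : S) : q ⁻¹' {x} := (H ⟨e, hSU e.2⟩).2
  have hsheet : Continuous sheet := by fun_prop
  have hconst (n : ℕ) : sheet ⟨u n, hu n⟩ = sheet ⟨u 0, hu 0⟩ :=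
    (Subtype.preconnectedSpace hS).constant hsheet
  have hbase : Tendsto (fun n ↦ (⟨q (u n), hSU (hu n)⟩ : U)) atTop (𝓝 ⟨x, hxU⟩) :=
    tendsto_subtype_rng.2 hlim
  have hu_eq (n : ℕ) : u n = H.symm (⟨q (u n), hSU (hu n)⟩, sheet ⟨u 0, hu 0⟩) := by
    rw [← hconst n, show (⟨q (u n), hSU (hu n)⟩ : U) = (H ⟨u n, hSU (hu n)⟩).1 from
      Subtype.ext (hH ⟨u n, hSU (hu n)⟩).symm]
    exact (congrArg Subtype.val (H.symm_apply_apply ⟨u n, hSU (hu n)⟩)).symm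
  have hlim' := ((continuous_subtype_val.comp H.symm.continuous).tendsto _).comp
    (hbase.prodMk_nhds (tendsto_const_nhds (x := sheet ⟨u 0, hu 0⟩)))
  exact ⟨_, hlim'.congr fun n ↦ (hu_eq n).symm⟩

theorem IsLengthSpace.completeSpace_of_isCoveringMap [CompleteSpace X] (hlen : IsLengthSpace Y)
    (hp : IsCoveringMap p) (huc : UniformContinuous p) : CompleteSpace Y := by
  refine Metric.complete_of_cauchySeq_tendsto fun u hu ↦ ?_
  obtain ⟨x, hx⟩ := cauchySeq_tendsto_of_complete (huc.comp_cauchySeq hu)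
  obtain ⟨U, hU, hlift⟩ := exists_tendsto_of_isCoveringMap hp x
  obtain ⟨r, hr, hball⟩ := Metric.mem_nhds_iff.1 hU
  obtain ⟨ρ, hρ, hpρ⟩ := Metric.uniformContinuous_iff.1 huc (r / 2) (half_pos hr)
  obtain ⟨N₁, hN₁⟩ := Metric.cauchySeq_iff.1 hu ρ hρ
  obtain ⟨N₂, hN₂⟩ := Metric.tendsto_atTop.1 hx (r / 2) (half_pos hr)
  set N := max N₁ N₂
  have hmaps : MapsTo p (ball (u N) ρ) U := fun z hz ↦ hball <| calc
    dist (p z) x ≤ dist (p z) (p (u N)) + dist (p (u N)) x := dist_triangle _ _ _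
    _ < r / 2 + r / 2 := add_lt_add (hpρ hz) (hN₂ N (le_max_right _ _))
    _ = r := add_halves r
  obtain ⟨y, hy⟩ := hlift (ball (u N) ρ) (hlen.isPreconnected_ball _ _) hmaps
    (fun n ↦ u (n + N))
    (fun n ↦ hN₁ _ ((le_max_left _ _).trans (Nat.le_add_left _ _)) _ (le_max_left _ _))
    ((tendsto_add_atTop_iff_nat N).2 hx)
  exact ⟨y, (tendsto_add_atTop_iff_nat N).1 hy⟩

end CoveringSpace

theorem cartan_hadamard_general {X Y : Type*} [MetricSpace X] [MetricSpace Y]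
    [CompleteSpace X] [SimplyConnectedSpace Y] (hX : IsLocallyConvexMetric X) {p : Y → X}
    (hp : IsCoveringMap p) (hiso : IsLocallyIsometric p) (hlen : IsLengthSpace Y) :
    (∀ γ₁ γ₂ : ℝ → Y, IsGeodesicSeg γ₁ (γ₁ 0) (γ₁ 1) → IsGeodesicSeg γ₂ (γ₂ 0) (γ₂ 1) →
      ∀ t ∈ Icc (0 : ℝ) 1,
        dist (γ₁ t) (γ₂ t) ≤ (1 - t) * dist (γ₁ 0) (γ₂ 0) + t * dist (γ₁ 1) (γ₂ 1)) ∧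
    (∀ a b : Y, ∃ γ : ℝ → Y, IsGeodesicSeg γ a b ∧
      ∀ γ' : ℝ → Y, IsGeodesicSeg γ' a b → EqOn γ γ' (Icc 0 1)) := by
  have hY : IsLocallyConvexMetric Y := hX.of_isLocallyIsometric hiso hp.isLocalHomeomorph
  have : CompleteSpace Y :=
    hlen.completeSpace_of_isCoveringMap hp (hiso.lipschitzWith hlen).uniformContinuous
  refine ⟨fun γ₁ γ₂ h₁ h₂ t ht ↦ ?_, exists_isGeodesicSeg_unique hY hlen⟩
  have h₁ : IsGeodesicOn γ₁ _ (Icc 0 1) := h₁.2.2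
  have h₂ : IsGeodesicOn γ₂ _ (Icc 0 1) := h₂.2.2
  exact h₁.isLocalGeodesicOn.dist_le_of_simplyConnected hY hlen h₂.isLocalGeodesicOn ht

/-- (Cartan–Hadamard, metric version) Let `X` be a complete, path-connected length space
whose metric is locally convex. If `p : Y → X` is a universal covering map (`Y` simply
connected) which is a local isometry, and the metric of `Y` is the induced length metric
(i.e. `Y` is a length space), then the metric on `Y` is globally convex and `Y` is
uniquely geodesic. -/
theorem cartan_hadamard {X Y : Type*} [MetricSpace X] [MetricSpace Y]
    [CompleteSpace X] [PathConnectedSpace X] [SimplyConnectedSpace Y]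
    (hXlen : ∀ x y : X, lengthMetric x y = ENNReal.ofReal (dist x y))
    (hlocconv : ∀ x : X, ∃ U ∈ nhds x,
      (∀ a ∈ U, ∀ b ∈ U, ∃ γ : ℝ → X, γ 0 = a ∧ γ 1 = b ∧ IsGeodesicIn U γ) ∧
      (∀ γ₁ γ₂ : ℝ → X, IsGeodesicIn U γ₁ → IsGeodesicIn U γ₂ →
        ∀ t ∈ Set.Icc (0:ℝ) 1,
          dist (γ₁ t) (γ₂ t) ≤ (1 - t) * dist (γ₁ 0) (γ₂ 0) + t * dist (γ₁ 1) (γ₂ 1)))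
    (p : Y → X) (hcov : IsCoveringMap p)
    (hlociso : ∀ y : Y, ∃ ε > (0:ℝ), ∀ a ∈ Metric.ball y ε, ∀ b ∈ Metric.ball y ε,
      dist (p a) (p b) = dist a b)
    (hYlen : ∀ a b : Y, lengthMetric a b = ENNReal.ofReal (dist a b)) :
    (∀ γ₁ γ₂ : ℝ → Y, IsGeodesicSeg γ₁ (γ₁ 0) (γ₁ 1) → IsGeodesicSeg γ₂ (γ₂ 0) (γ₂ 1) →
      ∀ t ∈ Set.Icc (0:ℝ) 1,
        dist (γ₁ t) (γ₂ t) ≤ (1 - t) * dist (γ₁ 0) (γ₂ 0) + t * dist (γ₁ 1) (γ₂ 1)) ∧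
    (∀ a b : Y, ∃ γ : ℝ → Y, IsGeodesicSeg γ a b ∧
      ∀ γ' : ℝ → Y, IsGeodesicSeg γ' a b → Set.EqOn γ γ' (Set.Icc 0 1)) :=
  cartan_hadamard_general hlocconv hcov (fun y ↦
    let ⟨ε, hε, hp⟩ := hlociso y
    ⟨Metric.ball y ε, Metric.ball_mem_nhds y hε, hp⟩) hYlen
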